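/- arXiv:1801.04702 — 4 statements merged into one kernel-verified Lean document; each statement's English description precedes it below -/
import Mathlib

section
/- Let n ≥ 3 be odd, let T be a regular tournament on n vertices, let x be a vertex of T, and let Q be a set of unordered pairs of distinct vertices. If the number of vertices y with {x,y} ∈ Q and x→y in T is strictly less than (n−1)/2, then there exists a tournament T' on the same vertex set agreeing with T on Q in which x is not a vertex of maximum out-degree. -/
/-- A tournament: irreflexive, and for distinct vertices exactly one orientation holds. -/
def IsTournament {V : Type*} (r : V → V → Prop) : Prop :=
  (∀ x, ¬ r x x) ∧ ∀ x y : V, x ≠ y → (r x y ↔ ¬ r y x)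

open Classical in
/-- Out-degree of a vertex: number of `y` with `r x y`. -/
noncomputable def outDeg {V : Type*} [Fintype V] (r : V → V → Prop) (x : V) : ℕ :=
  (Finset.univ.filter fun y => r x y).card

open Classical in
/-- In-degree of a vertex: number of `y` with `r y x`. -/
noncomputable def inDeg {V : Type*} [Fintype V] (r : V → V → Prop) (x : V) : ℕ :=
  (Finset.univ.filter fun y => r y x).card

/-- A king: reaches every other vertex by a path of length at most 2. -/
def IsKing {V : Type*} (r : V → V → Prop) (x : V) : Prop :=
  ∀ y : V, y ≠ x → r x y ∨ ∃ z, r x z ∧ r z y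

/-- A vertex of maximum out-degree. -/
def IsMOD {V : Type*} [Fintype V] (r : V → V → Prop) (x : V) : Prop :=
  ∀ y : V, outDeg r y ≤ outDeg r x

/-- `r'` agrees with `r` on the set `Q` of unordered pairs. -/
def AgreesOn {V : Type*} (r r' : V → V → Prop) (Q : Set (Sym2 V)) : Prop :=
  ∀ y z : V, s(y, z) ∈ Q → (r' y z ↔ r y z)

/-! If `Q` misses an out-arc `x → y`, the adversary may reverse it. This costs `x` one out-neighbour
and gives `y` one, so `y` overtakes `x` as soon as `d⁺(x) ≤ d⁺(y) + 1`. -/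

section ReversePair

variable {V : Type*} {r : V → V → Prop} {x y : V}

open Classical in
/-- The relation obtained from `r` by exchanging the roles of the two ends of the pair `p`; for a
tournament and a non-diagonal `p` this reverses a single arc. -/
def reversePair (r : V → V → Prop) (p : Sym2 V) (a b : V) : Prop :=
  if s(a, b) = p then r b a else r a b

theorem reversePair_of_eq {p : Sym2 V} (h : s(x, y) = p) : reversePair r p x y ↔ r y x := by
  rw [reversePair, if_pos h]

theorem reversePair_of_ne {p : Sym2 V} (h : s(x, y) ≠ p) : reversePair r p x y ↔ r x y := by
  rw [reversePair, if_neg h]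

theorem IsTournament.reversePair (hT : IsTournament r) (p : Sym2 V) :
    IsTournament (reversePair r p) := by
  refine ⟨fun a => ?_, fun a b hab => ?_⟩
  · by_cases h : s(a, a) = p
    · simpa only [reversePair_of_eq h] using hT.1 a
    · simpa only [reversePair_of_ne h] using hT.1 a
  · by_cases h : s(a, b) = p
    · rw [reversePair_of_eq h, reversePair_of_eq (Sym2.eq_swap.trans h)]
      exact hT.2 b a hab.symm
    · rw [reversePair_of_ne h, reversePair_of_ne (Sym2.eq_swap.trans_ne h)]
      exact hT.2 a b hab

theorem agreesOn_reversePair {p : Sym2 V} {Q : Set (Sym2 V)} (hp : p ∉ Q) :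
    AgreesOn r (reversePair r p) Q :=
  fun _ _ hQ => reversePair_of_ne (ne_of_mem_of_not_mem hQ hp)

theorem reversePair_left_iff (hyx : ¬ r y x) (b : V) :
    reversePair r s(x, y) x b ↔ r x b ∧ b ≠ y := by
  by_cases hb : b = y
  · subst hb
    simp only [reversePair_of_eq, hyx, ne_eq, not_true_eq_false, and_false]
  · rw [reversePair_of_ne (mt Sym2.congr_right.mp hb), and_iff_left hb]

theorem reversePair_right_iff (hxy : r x y) (b : V) :
    reversePair r s(x, y) y b ↔ b = x ∨ r y b := by
  by_cases hb : b = x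
  · subst hb
    simp only [reversePair_of_eq Sym2.eq_swap, hxy, true_or]
  · rw [Sym2.eq_swap, reversePair_of_ne (mt Sym2.congr_right.mp hb), or_iff_right hb]

variable [Fintype V]

theorem outDeg_reversePair_left_add_one (hxy : r x y) (hyx : ¬ r y x) :
    outDeg (reversePair r s(x, y)) x + 1 = outDeg r x := by
  classical
  have hnbrs : (Finset.univ.filter fun b => reversePair r s(x, y) x b) =
      (Finset.univ.filter fun b => r x b).erase y := by
    ext b
    simp only [Finset.mem_filter_univ, Finset.mem_erase, reversePair_left_iff hyx, and_comm]
  have hy : y ∈ Finset.univ.filter fun b => r x b := (Finset.mem_filter_univ y).2 hxy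
  rw [outDeg, outDeg, ← Finset.card_erase_add_one hy, ← hnbrs]

theorem outDeg_reversePair_right (hxy : r x y) (hyx : ¬ r y x) :
    outDeg (reversePair r s(x, y)) y = outDeg r y + 1 := by
  classical
  have hnbrs : (Finset.univ.filter fun b => reversePair r s(x, y) y b) =
      insert x (Finset.univ.filter fun b => r y b) := by
    ext b
    simp only [Finset.mem_filter_univ, Finset.mem_insert, reversePair_right_iff hxy]
  have hx : x ∉ Finset.univ.filter fun b => r y b := mt (Finset.mem_filter_univ x).1 hyx
  rw [outDeg, outDeg, ← Finset.card_insert_of_notMem hx, ← hnbrs]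

theorem not_isMOD_reversePair (hxy : r x y) (hyx : ¬ r y x) (hdeg : outDeg r x ≤ outDeg r y + 1) :
    ¬ IsMOD (reversePair r s(x, y)) x := by
  intro hmax
  have hle := hmax y
  have hx := outDeg_reversePair_left_add_one hxy hyx
  have hy := outDeg_reversePair_right hxy hyx
  omega

end ReversePair

theorem IsTournament.asymm {V : Type*} {r : V → V → Prop} (hT : IsTournament r) {x y : V}
    (hxy : r x y) : ¬ r y x :=
  (hT.2 x y fun h => hT.1 y (h ▸ hxy)).1 hxy

open Classical in
theorem exists_arc_notMem_of_card_lt_outDeg {V : Type*} [Fintype V] {r : V → V → Prop} {x : V}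
    {Q : Set (Sym2 V)}
    (hfew : (Finset.univ.filter fun y : V => s(x, y) ∈ Q ∧ r x y).card < outDeg r x) :
    ∃ y, r x y ∧ s(x, y) ∉ Q := by
  obtain ⟨y, hy, hyQ⟩ := Finset.exists_mem_notMem_of_card_lt_card hfew
  rw [Finset.mem_filter_univ] at hy hyQ
  exact ⟨y, hy, fun hQ => hyQ ⟨hQ, hy⟩⟩

open Classical in
theorem adversary_odd_out_general {V : Type*} [Fintype V] {r : V → V → Prop}
    (hT : IsTournament r) {x : V} {Q : Set (Sym2 V)}
    (hdeg : ∀ y : V, r x y → s(x, y) ∉ Q → outDeg r x ≤ outDeg r y + 1)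
    (hfew : (Finset.univ.filter fun y : V => s(x, y) ∈ Q ∧ r x y).card < outDeg r x) :
    ∃ r' : V → V → Prop, IsTournament r' ∧ AgreesOn r r' Q ∧ ¬ IsMOD r' x := by
  obtain ⟨y, hxy, hyQ⟩ := exists_arc_notMem_of_card_lt_outDeg hfew
  exact ⟨reversePair r s(x, y), hT.reversePair s(x, y), agreesOn_reversePair hyQ,
    not_isMOD_reversePair hxy (hT.asymm hxy) (hdeg y hxy hyQ)⟩

open Classical in
/-- odd regular case: if fewer than `(n-1)/2` out-arcs at `x` are covered
by `Q`, some tournament agreeing with `T` on `Q` has `x` not of maximum out-degree. -/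
theorem adversary_odd_out {V : Type*} [Fintype V] (r : V → V → Prop)
    (hT : IsTournament r) (hn : 3 ≤ Fintype.card V) (hodd : Odd (Fintype.card V))
    (hreg : ∀ y : V, outDeg r y = (Fintype.card V - 1) / 2)
    (x : V) (Q : Set (Sym2 V)) (hQ : ∀ p ∈ Q, ¬ p.IsDiag)
    (hfew : (Finset.univ.filter fun y : V => s(x, y) ∈ Q ∧ r x y).card
              < (Fintype.card V - 1) / 2) :
    ∃ r' : V → V → Prop, IsTournament r' ∧ AgreesOn r r' Q ∧ ¬ IsMOD r' x := by
  exact adversary_odd_out_general hT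
    (fun y _ _ => ((hreg x).trans (hreg y).symm).le.trans (Nat.le_succ _)) ((hreg x).symm ▸ hfew)
end

section
/- Let n ≥ 3 be odd, let T be a regular tournament on n vertices, let x and y be distinct vertices of T, and let Q be a set of unordered pairs of distinct vertices. If the number of vertices z with {y,z} ∈ Q and z→y in T is strictly less than (n−1)/2, then there exists a tournament T' on the same vertex set agreeing with T on Q in which y has strictly larger out-degree than x; in particular, x is not a vertex of maximum out-degree in T'. -/
/-!
By regularity `x` and `y` have the same out-degree, and there are more arcs into `y` than `Q`
covers. So some arc `z → y` is not covered by `Q`, and reversing it raises the out-degree of `y`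
without raising that of any other vertex.
-/

/-- The relation obtained from `r` by reversing the arcs on the pairs in `S`. Loops are left
unchanged even when `S` contains diagonal pairs. -/
def reverseOn {V : Type*} (r : V → V → Prop) (S : Set (Sym2 V)) (a b : V) : Prop :=
  (s(a, b) ∈ S ∧ r b a) ∨ (s(a, b) ∉ S ∧ r a b)

section Reversal

variable {V : Type*} {r : V → V → Prop} {S Q : Set (Sym2 V)} {a b : V}

theorem reverseOn_of_mem (h : s(a, b) ∈ S) : reverseOn r S a b ↔ r b a := by
  simp only [reverseOn, h, true_and, not_true_eq_false, false_and, or_false]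

theorem reverseOn_of_notMem (h : s(a, b) ∉ S) : reverseOn r S a b ↔ r a b := by
  simp only [reverseOn, h, false_and, not_false_eq_true, true_and, false_or]

theorem IsTournament.reverseOn (hT : IsTournament r) (S : Set (Sym2 V)) :
    IsTournament (reverseOn r S) := by
  refine ⟨fun a h => hT.1 a (h.elim And.right And.right), fun a b hab => ?_⟩
  by_cases h : s(a, b) ∈ S
  · rw [reverseOn_of_mem h, reverseOn_of_mem (Sym2.eq_swap ▸ h)]
    exact hT.2 b a hab.symm
  · rw [reverseOn_of_notMem h, reverseOn_of_notMem (Sym2.eq_swap ▸ h)]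
    exact hT.2 a b hab

theorem agreesOn_reverseOn (h : Disjoint S Q) : AgreesOn r (reverseOn r S) Q :=
  fun _ _ hQ => reverseOn_of_notMem (h.notMem_of_mem_right hQ)

theorem outDeg_reverseOn_le [Fintype V] (h : ∀ b, s(a, b) ∈ S → r a b) :
    outDeg (reverseOn r S) a ≤ outDeg r a := by
  classical
  exact Finset.card_le_card <| Finset.monotone_filter_right _ fun b _ hb =>
    hb.elim (fun hb => h b hb.1) And.right

theorem outDeg_lt_outDeg_reverseOn [Fintype V] (h : ∀ c, s(a, c) ∈ S → ¬ r a c)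
    (hS : s(a, b) ∈ S) (hba : r b a) : outDeg r a < outDeg (reverseOn r S) a := by
  classical
  refine Finset.card_lt_card <| (Finset.ssubset_iff_of_subset ?_).2 ⟨b, ?_, ?_⟩
  · exact Finset.monotone_filter_right _ fun c _ hc =>
      (reverseOn_of_notMem fun hcS => h c hcS hc).2 hc
  · exact Finset.mem_filter_univ _ |>.2 <| (reverseOn_of_mem hS).2 hba
  · exact fun hb => h b hS (Finset.mem_filter_univ _ |>.1 hb)

end Reversal

section Degrees

variable {V : Type*} [Fintype V] {r : V → V → Prop}

theorem IsTournament.outDeg_add_inDeg_add_one (hT : IsTournament r) (v : V) :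
    outDeg r v + inDeg r v + 1 = Fintype.card V := by
  classical
  have hin : (Finset.univ.filter fun w => r w v) =
      (Finset.univ.filter fun w => ¬ r v w).erase v := by
    ext w
    simp only [Finset.mem_filter_univ, Finset.mem_erase]
    refine ⟨fun hw => ?_, fun ⟨hne, hw⟩ => (hT.2 w v hne).2 hw⟩
    have hne : w ≠ v := fun h => hT.1 v (h ▸ hw)
    exact ⟨hne, (hT.2 w v hne).1 hw⟩
  have hv : v ∈ Finset.univ.filter fun w => ¬ r v w := Finset.mem_filter_univ _ |>.2 (hT.1 v)
  calc outDeg r v + inDeg r v + 1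
      = outDeg r v + (((Finset.univ.filter fun w => ¬ r v w).erase v).card + 1) := by
        rw [inDeg, hin, add_assoc]
    _ = outDeg r v + (Finset.univ.filter fun w => ¬ r v w).card := by
        rw [Finset.card_erase_add_one hv]
    _ = Fintype.card V := by
        rw [outDeg, Finset.card_filter_add_card_filter_not, Finset.card_univ]

theorem IsTournament.half_le_inDeg_of_outDeg_le_half (hT : IsTournament r) {v : V}
    (h : outDeg r v ≤ (Fintype.card V - 1) / 2) : (Fintype.card V - 1) / 2 ≤ inDeg r v := by
  have hsum := hT.outDeg_add_inDeg_add_one v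
  omega

open Classical in
theorem exists_rel_notMem_of_card_lt_inDeg {y : V} {Q : Set (Sym2 V)}
    (hfew : (Finset.univ.filter fun z : V => s(y, z) ∈ Q ∧ r z y).card < inDeg r y) :
    ∃ z, r z y ∧ s(y, z) ∉ Q := by
  obtain ⟨z, hzy, hz⟩ := Finset.exists_mem_notMem_of_card_lt_card hfew
  rw [Finset.mem_filter_univ] at hzy hz
  exact ⟨z, hzy, fun hzQ => hz ⟨hzQ, hzy⟩⟩

end Degrees

open Classical in
theorem adversary_odd_in_general {V : Type*} [Fintype V] {r : V → V → Prop}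
    (hT : IsTournament r) {x y : V} (hxy : x ≠ y) (hdeg : outDeg r x ≤ outDeg r y)
    {Q : Set (Sym2 V)}
    (hfew : (Finset.univ.filter fun z : V => s(y, z) ∈ Q ∧ r z y).card < inDeg r y) :
    ∃ r' : V → V → Prop, IsTournament r' ∧ AgreesOn r r' Q ∧
      outDeg r' x < outDeg r' y ∧ ¬ IsMOD r' x := by
  obtain ⟨z, hzy, hzQ⟩ := exists_rel_notMem_of_card_lt_inDeg hfew
  have hyz : ¬ r y z := (hT.2 z y fun h => hT.1 y (h ▸ hzy)).1 hzy
  have hx : outDeg (reverseOn r {s(y, z)}) x ≤ outDeg r x := by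
    refine outDeg_reverseOn_le fun b hb => ?_
    obtain ⟨rfl, rfl⟩ | ⟨rfl, rfl⟩ := Sym2.eq_iff.1 hb
    · exact absurd rfl hxy
    · exact hzy
  have hy : outDeg r y < outDeg (reverseOn r {s(y, z)}) y :=
    outDeg_lt_outDeg_reverseOn (fun c hc => Sym2.congr_right.1 hc ▸ hyz) rfl hzy
  have hlt := (hx.trans hdeg).trans_lt hy
  exact ⟨reverseOn r {s(y, z)}, hT.reverseOn _,
    agreesOn_reverseOn (Set.disjoint_singleton_left.2 hzQ), hlt, fun h => (h y).not_gt hlt⟩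

open Classical in
/-- odd regular case: if fewer than `(n-1)/2` in-arcs at `y` are covered
by `Q`, some tournament agreeing with `T` on `Q` gives `y` strictly larger out-degree
than `x`; in particular `x` is not a vertex of maximum out-degree there. -/
theorem adversary_odd_in {V : Type*} [Fintype V] (r : V → V → Prop)
    (hT : IsTournament r) (hn : 3 ≤ Fintype.card V) (hodd : Odd (Fintype.card V))
    (hreg : ∀ w : V, outDeg r w = (Fintype.card V - 1) / 2)
    (x y : V) (hxy : x ≠ y) (Q : Set (Sym2 V)) (hQ : ∀ p ∈ Q, ¬ p.IsDiag)
    (hfew : (Finset.univ.filter fun z : V => s(y, z) ∈ Q ∧ r z y).card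
              < (Fintype.card V - 1) / 2) :
    ∃ r' : V → V → Prop, IsTournament r' ∧ AgreesOn r r' Q ∧
      outDeg r' x < outDeg r' y ∧ ¬ IsMOD r' x :=
  adversary_odd_in_general hT hxy ((hreg x).trans (hreg y).symm).le
    (hfew.trans_le (hT.half_le_inDeg_of_outDeg_le_half (hreg y).le))
end

section
/- Let n ≥ 2 be even, let T be an almost regular tournament on n vertices, let x be a vertex of T, and let Q be a finite set of unordered pairs of distinct vertices. If in every tournament T' on the same vertex set that agrees with T on Q the vertex x is a vertex of maximum out-degree, then |Q| ≥ (n−1)(n−2)/2. -/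
/-!
Fix `y ≠ x` and turn every arc between `y` and another vertex whose pair is not in `Q` away from
`y`. The result agrees with `T` on `Q`, the out-degree of `x` has not grown, and the only arcs
still entering `y` are those of `T` whose pair lies in `Q`. As `x` must still have maximum
out-degree, at least `d⁻(x)` arcs of `T` into `y` have their pair in `Q`. Arcs into different
vertices `y` use different pairs, so `|Q| ≥ (n - 1) d⁻(x)`, and `2 d⁻(x) ≥ n - 2` when `T` is
almost regular.
-/

section Tournament

variable {V : Type*} {r : V → V → Prop} {Q : Set (Sym2 V)} {x y : V}

theorem IsTournament.asymm_s11 (hr : IsTournament r) {u v : V} (huv : r u v) : ¬ r v u := by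
  have hne : u ≠ v := by
    rintro rfl
    exact hr.1 u huv
  exact (hr.2 u v hne).1 huv

/-- The arcs of `r` whose unordered pair lies in `Q`: what is known of `r` after querying `Q`. -/
def queriedArcs (r : V → V → Prop) (Q : Set (Sym2 V)) : V → V → Prop :=
  fun u v => r u v ∧ s(u, v) ∈ Q

open Classical in
/-- The relation obtained from `r` by directing every pair outside `Q` that contains `y` away from
`y`: among the tournaments agreeing with `r` on `Q`, a most favourable one for `y`. The condition
`v ≠ y` keeps it irreflexive at `y`. -/
def orientOutward (r : V → V → Prop) (Q : Set (Sym2 V)) (y : V) : V → V → Prop :=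
  fun u v => if y ∈ s(u, v) ∧ s(u, v) ∉ Q then u = y ∧ v ≠ y else r u v

theorem isTournament_orientOutward (hr : IsTournament r) (Q : Set (Sym2 V)) (y : V) :
    IsTournament (orientOutward r Q y) := by
  refine ⟨fun u => ?_, fun u v huv => ?_⟩
  · have := hr.1 u
    unfold orientOutward
    split_ifs <;> tauto
  · have := hr.2 u v huv
    have hswap : s(v, u) = s(u, v) := Sym2.eq_swap
    simp only [orientOutward, hswap, Sym2.mem_iff]
    split_ifs <;> grind

theorem agreesOn_orientOutward (r : V → V → Prop) (Q : Set (Sym2 V)) (y : V) :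
    AgreesOn r (orientOutward r Q y) Q := by
  intro u v huv
  simp [orientOutward, huv]

theorem orientOutward_apply_right (r : V → V → Prop) (Q : Set (Sym2 V)) (y z : V) :
    orientOutward r Q y z y ↔ queriedArcs r Q z y := by
  by_cases hz : s(z, y) ∈ Q <;> simp [orientOutward, queriedArcs, hz]

theorem of_orientOutward_of_ne {z : V} (hxy : x ≠ y) (h : orientOutward r Q y x z) : r x z := by
  unfold orientOutward at h
  split_ifs at h
  · exact absurd h.1 hxy
  · exact h

variable [Fintype V]

theorem outDeg_mono {r' : V → V → Prop} (h : ∀ z, r' x z → r x z) : outDeg r' x ≤ outDeg r x := by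
  classical
  exact Finset.card_le_card (Finset.monotone_filter_right _ fun z _ => h z)

theorem IsTournament.outDeg_add_inDeg (hr : IsTournament r) (x : V) :
    outDeg r x + inDeg r x = Fintype.card V - 1 := by
  classical
  have hdisj : Disjoint (Finset.univ.filter (r x ·)) (Finset.univ.filter (r · x)) :=
    Finset.disjoint_filter.2 fun _ _ => hr.asymm_s11
  have hunion : Finset.univ.filter (r x ·) ∪ Finset.univ.filter (r · x) = Finset.univ.erase x := by
    ext z
    have hirr := hr.1 x
    have htot := hr.2 x z
    grind
  rw [← Finset.card_univ, ← Finset.card_erase_of_mem (Finset.mem_univ x), ← hunion,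
    Finset.card_union_of_disjoint hdisj]
  simp only [outDeg, inDeg]

theorem IsTournament.card_sub_two_le_two_mul_inDeg (hr : IsTournament r)
    (hx : outDeg r x ≤ Fintype.card V / 2) : Fintype.card V - 2 ≤ 2 * inDeg r x := by
  have := hr.outDeg_add_inDeg x
  omega

theorem inDeg_orientOutward_self (r : V → V → Prop) (Q : Set (Sym2 V)) (y : V) :
    inDeg (orientOutward r Q y) y = inDeg (queriedArcs r Q) y := by
  classical
  exact congrArg Finset.card (Finset.filter_congr fun z _ => orientOutward_apply_right r Q y z)

theorem IsTournament.inDeg_le_inDeg_queriedArcs (hr : IsTournament r) (hxy : x ≠ y)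
    (hx : IsMOD (orientOutward r Q y) x) : inDeg r x ≤ inDeg (queriedArcs r Q) y := by
  have hout : outDeg (orientOutward r Q y) y ≤ outDeg r x :=
    (hx y).trans (outDeg_mono fun _ => of_orientOutward_of_ne hxy)
  have hdeg_x := hr.outDeg_add_inDeg x
  have hdeg_y := (isTournament_orientOutward hr Q y).outDeg_add_inDeg y
  rw [inDeg_orientOutward_self] at hdeg_y
  omega

theorem sum_inDeg_le_card {E : Finset (Sym2 V)} (hasymm : ∀ u v, r u v → ¬ r v u)
    (hE : ∀ u v, r u v → s(u, v) ∈ E) : ∑ y, inDeg r y ≤ E.card := by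
  classical
  simp only [inDeg, ← Finset.card_sigma]
  apply Finset.card_le_card_of_injOn fun p => s(p.2, p.1)
  · rintro ⟨v, u⟩ huv
    exact hE u v (by simpa using huv)
  · rintro ⟨v, u⟩ huv ⟨v', u'⟩ huv' heq
    replace huv : r u v := by simpa using huv
    replace huv' : r u' v' := by simpa using huv'
    obtain ⟨rfl, rfl⟩ | ⟨rfl, rfl⟩ := Sym2.eq_iff.1 heq
    · rfl
    · exact absurd huv' (hasymm _ _ huv)

end Tournament

theorem certificate_lower_bound_even_general {V : Type*} [Fintype V] {r : V → V → Prop}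
    (hT : IsTournament r) (x : V) (Q : Finset (Sym2 V))
    (hcert : ∀ r' : V → V → Prop, IsTournament r' → AgreesOn r r' ↑Q → IsMOD r' x) :
    (Fintype.card V - 1) * inDeg r x ≤ Q.card := by
  classical
  have hin : ∀ y ∈ Finset.univ.erase x, inDeg r x ≤ inDeg (queriedArcs r ↑Q) y := fun y hy =>
    hT.inDeg_le_inDeg_queriedArcs (Finset.ne_of_mem_erase hy).symm
      (hcert _ (isTournament_orientOutward hT ↑Q y) (agreesOn_orientOutward r ↑Q y))
  calc (Fintype.card V - 1) * inDeg r x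
      = (Finset.univ.erase x).card • inDeg r x := by
        rw [Finset.card_erase_of_mem (Finset.mem_univ x), Finset.card_univ, smul_eq_mul]
    _ ≤ ∑ y ∈ Finset.univ.erase x, inDeg (queriedArcs r ↑Q) y := Finset.card_nsmul_le_sum _ _ _ hin
    _ ≤ ∑ y, inDeg (queriedArcs r ↑Q) y := Finset.sum_le_univ_sum_of_nonneg fun _ => Nat.zero_le _
    _ ≤ Q.card := sum_inDeg_le_card (fun _ _ huv hvu => hT.asymm_s11 huv.1 hvu.1) fun _ _ huv => huv.2

/-- even almost regular case lower bound: if every tournament agreeing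
with `T` on `Q` has `x` as a vertex of maximum out-degree, then `|Q| ≥ (n-1)(n-2)/2`. -/
theorem certificate_lower_bound_even {V : Type*} [Fintype V] (r : V → V → Prop)
    (hT : IsTournament r) (hn : 2 ≤ Fintype.card V) (heven : Even (Fintype.card V))
    (har : ∀ w : V, outDeg r w = Fintype.card V / 2 ∨ outDeg r w = Fintype.card V / 2 - 1)
    (x : V) (Q : Finset (Sym2 V)) (hQ : ∀ p ∈ Q, ¬ p.IsDiag)
    (hcert : ∀ r' : V → V → Prop, IsTournament r' → AgreesOn r r' ↑Q → IsMOD r' x) :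
    (Fintype.card V - 1) * (Fintype.card V - 2) / 2 ≤ Q.card := by
  have hin := hT.card_sub_two_le_two_mul_inDeg (x := x) (by have := har x; omega)
  exact (Nat.div_le_of_le_mul (Nat.mul_left_comm 2 _ _ ▸ Nat.mul_le_mul_left _ hin)).trans
    (certificate_lower_bound_even_general hT x Q hcert)
end

section
/- For every odd integer n ≥ 3 there exists a tournament T on n vertices with the following property: for every vertex x of T and every finite set Q of unordered pairs of distinct vertices, if in every tournament T' on the same vertex set that agrees with T on Q the vertex x is a vertex of maximum out-degree, then |Q| ≥ (n−1)²/2. Hence the worst-case cost of finding a maximum out-degree vertex in a tournament on n vertices (n odd) is at least (n−1)²/2 binary inquiries. -/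
/-!
Reversing an arc `z → y` raises the out-degree of `y` by one and that of no other vertex. So if `y`
ties with the vertex `x` for the maximum out-degree, no inquiry set that leaves `z → y` unasked
certifies `x`. In a regular tournament of order `n` every vertex ties, hence all arcs into vertices
other than `x` have to be asked: `n - 1` vertices, each of in-degree `(n - 1) / 2`. Circulant
tournaments supply a regular tournament of every odd order.
-/

section Tournament

variable {V : Type*} {r : V → V → Prop} {x y z : V}

/-- The inquiries `Q`, answered as in the tournament `r`, certify that `x` is a vertex of maximum
out-degree. -/
def CertifiesMOD [Fintype V] (r : V → V → Prop) (Q : Set (Sym2 V)) (x : V) : Prop :=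
  ∀ r' : V → V → Prop, IsTournament r' → AgreesOn r r' Q → IsMOD r' x

open Classical in
/-- The relation `r` with its orientation on the unordered pair `e` reversed; it is the witness
against inquiry sets that do not contain `e`. -/
def reverseEdge (r : V → V → Prop) (e : Sym2 V) (a b : V) : Prop :=
  if s(a, b) = e then r b a else r a b

lemma IsTournament.ne (hr : IsTournament r) (h : r x y) : x ≠ y := by
  rintro rfl
  exact hr.1 x h

lemma IsTournament.asymm_s14 (hr : IsTournament r) (h : r x y) : ¬ r y x :=
  (hr.2 x y (hr.ne h)).1 h

lemma isTournament_reverseEdge (hr : IsTournament r) (e : Sym2 V) :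
    IsTournament (reverseEdge r e) := by
  refine ⟨fun a => by simpa [reverseEdge] using hr.1 a, fun a b hab => ?_⟩
  rw [reverseEdge, reverseEdge, Sym2.eq_swap (a := b)]
  split_ifs
  · exact hr.2 b a hab.symm
  · exact hr.2 a b hab

lemma agreesOn_reverseEdge {Q : Set (Sym2 V)} {e : Sym2 V} (he : e ∉ Q) :
    AgreesOn r (reverseEdge r e) Q := fun _ _ hab => by
  rw [reverseEdge, if_neg (ne_of_mem_of_not_mem hab he)]

variable [Fintype V]

lemma IsTournament.outDeg_reverseEdge_head (hr : IsTournament r) (hzy : r z y) :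
    outDeg (reverseEdge r s(y, z)) y = outDeg r y + 1 := by
  classical
  have hz : z ∉ Finset.univ.filter (r y) := by simpa using hr.asymm_s14 hzy
  rw [outDeg, outDeg, ← Finset.card_insert_of_notMem hz]
  congr 1
  ext w
  by_cases hw : w = z <;> simp [reverseEdge, Sym2.congr_right, -Sym2.eq, hw, hzy]

lemma IsTournament.outDeg_reverseEdge_le (hr : IsTournament r) (hzy : r z y) (hxy : x ≠ y) :
    outDeg (reverseEdge r s(y, z)) x ≤ outDeg r x := by
  classical
  refine Finset.card_le_card (Finset.monotone_filter_right _ fun w _ hw => ?_)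
  rw [reverseEdge] at hw
  split_ifs at hw with he
  · obtain ⟨rfl, rfl⟩ : x = z ∧ w = y := by simpa [hxy] using he
    exact absurd hw (hr.asymm_s14 hzy)
  · exact hw

lemma IsTournament.mem_of_certifiesMOD (hr : IsTournament r) {Q : Set (Sym2 V)}
    (hQ : CertifiesMOD r Q x) (hxy : x ≠ y) (hdeg : outDeg r x ≤ outDeg r y) (hzy : r z y) :
    s(y, z) ∈ Q := by
  by_contra hmem
  have hmax := hQ _ (isTournament_reverseEdge hr _) (agreesOn_reverseEdge hmem) y
  have hy := hr.outDeg_reverseEdge_head hzy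
  have hx := hr.outDeg_reverseEdge_le hzy hxy
  omega

lemma IsTournament.sum_inDeg_le_card_of_forall_mem (hr : IsTournament r) {S : Finset V}
    {Q : Finset (Sym2 V)} (hS : ∀ y ∈ S, ∀ z, r z y → s(y, z) ∈ Q) :
    ∑ y ∈ S, inDeg r y ≤ Q.card := by
  classical
  simp only [inDeg, ← Finset.card_sigma]
  refine Finset.card_le_card_of_injOn (fun p => s(p.1, p.2)) ?_ ?_
  · rintro ⟨y, z⟩ h
    simp only [Finset.coe_sigma, Set.mem_sigma_iff, Finset.mem_coe, Finset.mem_filter_univ] at h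
    exact hS y h.1 z h.2
  · rintro ⟨y, z⟩ h ⟨y', z'⟩ h' heq
    simp only [Finset.coe_sigma, Set.mem_sigma_iff, Finset.mem_coe, Finset.mem_filter_univ] at h h'
    obtain ⟨rfl, rfl⟩ | ⟨rfl, rfl⟩ := Sym2.eq_iff.1 heq
    · rfl
    · exact absurd h.2 (hr.asymm_s14 h'.2)

lemma IsTournament.inDeg_add_outDeg_add_one (hr : IsTournament r) (x : V) :
    inDeg r x + outDeg r x + 1 = Fintype.card V := by
  classical
  have hnot : Finset.univ.filter (fun y => ¬ r x y) =
      insert x (Finset.univ.filter fun y => r y x) := by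
    ext y
    by_cases hxy : y = x
    · simp [hxy, hr.1]
    · simp [hxy, hr.2 y x hxy]
  have hcard := Finset.card_filter_add_card_filter_not (s := Finset.univ) (fun y => r x y)
  rw [hnot, Finset.card_insert_of_notMem (by simpa using hr.1 x), Finset.card_univ] at hcard
  rw [inDeg, outDeg]
  omega

lemma sum_outDeg_eq_sum_inDeg (r : V → V → Prop) : ∑ x, outDeg r x = ∑ x, inDeg r x := by
  classical
  exact Finset.sum_card_bipartiteAbove_eq_sum_card_bipartiteBelow r

variable {d : ℕ}

lemma IsTournament.inDeg_eq_of_regular (hr : IsTournament r) (hd : ∀ v, outDeg r v = d) (x : V) :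
    inDeg r x = d := by
  have hin (v : V) : inDeg r v = inDeg r x := by
    have hv := hr.inDeg_add_outDeg_add_one v
    have hx := hr.inDeg_add_outDeg_add_one x
    rw [hd] at hv hx
    omega
  have hsum := sum_outDeg_eq_sum_inDeg r
  simp only [hd, hin, Finset.sum_const, smul_eq_mul] at hsum
  exact (Nat.eq_of_mul_eq_mul_left (Finset.card_pos.2 ⟨x, Finset.mem_univ x⟩) hsum).symm

theorem IsTournament.sq_card_sub_one_le_two_mul_card_of_regular (hr : IsTournament r)
    (hd : ∀ v, outDeg r v = d) {Q : Finset (Sym2 V)} (hQ : CertifiesMOD r Q x) :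
    (Fintype.card V - 1) ^ 2 ≤ 2 * Q.card := by
  classical
  have harcs : ∑ y ∈ Finset.univ.erase x, inDeg r y ≤ Q.card :=
    hr.sum_inDeg_le_card_of_forall_mem fun y hy z hzy =>
      hr.mem_of_certifiesMOD hQ (Finset.ne_of_mem_erase hy).symm (by rw [hd, hd]) hzy
  have hcard : Fintype.card V - 1 = 2 * d := by
    rw [← hr.inDeg_add_outDeg_add_one x, hr.inDeg_eq_of_regular hd, hd]
    omega
  calc (Fintype.card V - 1) ^ 2
      = 2 * ((Fintype.card V - 1) * d) := by rw [hcard]; ring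
    _ = 2 * ∑ y ∈ Finset.univ.erase x, inDeg r y := by
      simp [hr.inDeg_eq_of_regular hd, Finset.card_erase_of_mem]
    _ ≤ 2 * Q.card := Nat.mul_le_mul_left 2 harcs

end Tournament

section Circulant

variable {G : Type*} [AddGroup G] {S : Finset G}

/-- The circulant relation on `G` with connection set `S`: the out-neighbours of `a` are the
translates `s + a` with `s ∈ S`. -/
def circulant (S : Finset G) (a b : G) : Prop := b - a ∈ S

lemma isTournament_circulant (hzero : 0 ∉ S) (hneg : ∀ s ≠ 0, (s ∈ S ↔ -s ∉ S)) :
    IsTournament (circulant S) := by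
  refine ⟨fun a => by simpa [circulant] using hzero, fun a b hab => ?_⟩
  simpa [circulant] using hneg (b - a) (sub_ne_zero.2 hab.symm)

lemma outDeg_circulant [Fintype G] (a : G) : outDeg (circulant S) a = S.card := by
  classical
  rw [outDeg, ← Finset.card_map (s := S) (Equiv.addRight a).toEmbedding]
  congr 1
  ext b
  rw [Finset.mem_filter_univ, Finset.mem_map_equiv, Equiv.addRight_symm_apply, circulant,
    sub_eq_add_neg]

end Circulant

lemma mem_Ioc_zero_iff_neg_notMem {m : ℕ} {s : Fin (2 * m + 1)} (hs : s ≠ 0) :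
    s ∈ Finset.Ioc 0 ⟨m, by omega⟩ ↔ -s ∉ Finset.Ioc 0 ⟨m, by omega⟩ := by
  have hpos := Fin.pos_iff_ne_zero.2 hs
  simp only [Finset.mem_Ioc, Fin.lt_def, Fin.le_def, Fin.val_neg, Fin.val_zero, if_neg hs] at hpos ⊢
  omega

/-- for every odd `n ≥ 3` there is a tournament on `n` vertices such that
any query set `Q` certifying some vertex `x` as a vertex of maximum out-degree satisfies
`|Q| ≥ (n-1)²/2`. -/
theorem worst_case_cost_odd (n : ℕ) (hn : 3 ≤ n) (hodd : Odd n) :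
    ∃ r : Fin n → Fin n → Prop, IsTournament r ∧
      ∀ (x : Fin n) (Q : Finset (Sym2 (Fin n))), (∀ p ∈ Q, ¬ p.IsDiag) →
        (∀ r' : Fin n → Fin n → Prop, IsTournament r' → AgreesOn r r' ↑Q → IsMOD r' x) →
        (n - 1) ^ 2 / 2 ≤ Q.card := by
  obtain ⟨m, rfl⟩ := hodd
  have hr := isTournament_circulant (S := Finset.Ioc (0 : Fin (2 * m + 1)) ⟨m, by omega⟩)
    Finset.left_notMem_Ioc fun _ => mem_Ioc_zero_iff_neg_notMem
  refine ⟨_, hr, fun x Q _ hQ => Nat.div_le_of_le_mul ?_⟩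
  simpa only [Fintype.card_fin] using
    hr.sq_card_sub_one_le_two_mul_card_of_regular outDeg_circulant hQ
end
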